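/- arXiv:0708.2315 — 11 statements merged into one kernel-verified Lean document; each statement's English description precedes it below -/
import Mathlib

section
/- Let k be a field and L a k-vector space with a bilinear bracket [·,·] : L × L → L. Define two bilinear operations on L by x ⊢ y := [x, y] and x ⊣ y := −[y, x]. Then the bracket satisfies the left Leibniz identity [a,[b,c]] = [[a,b],c] + [b,[a,c]] (for all a,b,c ∈ L) if and only if the following identities hold for all x₁, x₂, x₃ ∈ L: (i) (x₁⊣x₂)⊢x₃ = (x₁⊢x₂)⊢x₃; (ii) x₁⊣(x₂⊢x₃) = x₁⊣(x₂⊣x₃); (iii) x₁⊢x₂ + x₂⊣x₁ = 0; (iv) x₁⊣x₂ + x₂⊢x₁ = 0; (v) x₁⊣(x₂⊣x₃) − x₂⊢(x₁⊣x₃) − (x₁⊣x₂)⊣x₃ = 0; (vi) x₁⊢(x₂⊣x₃) − x₂⊣(x₁⊣x₃) − (x₁⊢x₂)⊣x₃ = 0; (vii) x₁⊢(x₂⊢x₃) − x₂⊢(x₁⊢x₃) − (x₁⊢x₂)⊢x₃ = 0. -/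
/-- Left multiplication by `[a,b] + [b,a]` vanishes: add the Leibniz identities for `(a, b, c)` and
`(b, a, c)`. -/
theorem leibniz_skew_left {k L : Type*} [Field k] [AddCommGroup L] [Module k L]
    (bracket : L →ₗ[k] L →ₗ[k] L)
    (h : ∀ a b c : L,
      bracket a (bracket b c) = bracket (bracket a b) c + bracket b (bracket a c))
    (a b c : L) : -bracket (bracket b a) c = bracket (bracket a b) c := by
  have h₁ := h a b c
  have h₂ := h b a c
  rw [h₁] at h₂
  grind

/-- For a bilinear bracket on `L`, with `x ⊢ y := [x,y]` and
`x ⊣ y := −[y,x]`, the left Leibniz identity holds iff the seven Lie-dialgebra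
identities (i)–(vii) hold. -/
theorem stmt_1 (k : Type*) [Field k] (L : Type*) [AddCommGroup L] [Module k L]
    (bracket : L →ₗ[k] L →ₗ[k] L)
    (vdash dashv : L → L → L)
    (hvd : ∀ x y : L, vdash x y = bracket x y)
    (hdv : ∀ x y : L, dashv x y = - bracket y x) :
    (∀ a b c : L,
        bracket a (bracket b c) = bracket (bracket a b) c + bracket b (bracket a c))
      ↔
    ((∀ x₁ x₂ x₃ : L, vdash (dashv x₁ x₂) x₃ = vdash (vdash x₁ x₂) x₃) ∧
     (∀ x₁ x₂ x₃ : L, dashv x₁ (vdash x₂ x₃) = dashv x₁ (dashv x₂ x₃)) ∧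
     (∀ x₁ x₂ : L, vdash x₁ x₂ + dashv x₂ x₁ = 0) ∧
     (∀ x₁ x₂ : L, dashv x₁ x₂ + vdash x₂ x₁ = 0) ∧
     (∀ x₁ x₂ x₃ : L,
        dashv x₁ (dashv x₂ x₃) - vdash x₂ (dashv x₁ x₃) - dashv (dashv x₁ x₂) x₃ = 0) ∧
     (∀ x₁ x₂ x₃ : L,
        vdash x₁ (dashv x₂ x₃) - dashv x₂ (dashv x₁ x₃) - dashv (vdash x₁ x₂) x₃ = 0) ∧
     (∀ x₁ x₂ x₃ : L,
        vdash x₁ (vdash x₂ x₃) - vdash x₂ (vdash x₁ x₃) - vdash (vdash x₁ x₂) x₃ = 0)) := by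
  simp only [hvd, hdv, map_neg, LinearMap.neg_apply, neg_neg]
  constructor
  · intro h
    refine ⟨fun x y z => leibniz_skew_left bracket h x y z,
      fun x y z => leibniz_skew_left bracket h z y x,
      fun x y => add_neg_cancel _, fun x y => neg_add_cancel _,
      fun x y z => ?_, fun x y z => ?_, fun x y z => ?_⟩
    · rw [h z y x]; abel
    · rw [h z x y]; abel
    · rw [h x y z]; abel
  -- Identity (vii) alone is the Leibniz identity.
  · rintro ⟨-, -, -, -, -, -, h⟩ a b c
    have := h a b c
    grind
end

section
/- Let k be a field and A an associative unital k-algebra (possibly noncommutative). For λ ∈ k and p, q ∈ Polynomial A define the λ-product (p ∘λ q) := C(p.eval((-λ) • 1)) * (q.comp(X + C(λ • 1))). Then for all p, q, r ∈ Polynomial A and all λ, μ ∈ k, the conformal associativity identity holds: p ∘λ (q ∘μ r) = (p ∘λ q) ∘(μ+λ) r. -/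
/-!
Both sides equal `C (p(-λ) * q(-μ)) * r(X + λ + μ)`. The only point needing care is that, over a
noncommutative `A`, substitution is not multiplicative and composition of polynomials is not
associative in general. Substituting after a shift `X ↦ X + z` is nevertheless well behaved when
`z` is central (`comp_add_smul_one_comp`), and the shifts here are by `λ • 1` and `μ • 1`.
Evaluation is covered by the same lemma, as substitution of a constant polynomial.
-/

open Polynomial

/-- The λ-product `(p ∘λ q) = C(p.eval((-λ)•1)) * q.comp(X + C(λ•1))` on
`Polynomial A`, modelling the pseudo-product of the current conformal algebra
`Cur A` over `H = k[T]`. -/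
noncomputable def cprod {k : Type*} [Field k] {A : Type*} [Ring A] [Algebra k A]
    (lam : k) (p q : Polynomial A) : Polynomial A :=
  C (p.eval ((-lam) • (1 : A))) * (q.comp (X + C (lam • (1 : A))))

/-- A central shift may be composed with an arbitrary substitution `s`. By linearity this reduces
to powers of `X + z`, where centrality of `z` lets its coefficient be pulled out to the left. -/
lemma comp_add_smul_one_comp {k A : Type*} [Field k] [Ring A] [Algebra k A]
    (c : k) (q s : Polynomial A) :
    (q.comp (X + C (c • (1 : A)))).comp s = q.comp (s + C (c • (1 : A))) := by
  have hc : ∀ f : Polynomial A, f * C (c • (1 : A)) = C (c • (1 : A)) * f := by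
    intro f
    ext n
    simp
  have hpow : ∀ n : ℕ, ((X + C (c • (1 : A))) ^ n).comp s = (s + C (c • (1 : A))) ^ n := by
    intro n
    induction n with
    | zero => simp
    | succ n ih =>
      rw [pow_succ, mul_add, add_comp, mul_X_comp, hc, C_mul_comp, ih, pow_succ, mul_add, hc]
  induction q using Polynomial.induction_on' with
  | add f g hf hg => simp only [add_comp, hf, hg]
  | monomial n a => rw [monomial_comp, C_mul_comp, hpow, monomial_comp]

lemma eval_comp_add_smul_one {k A : Type*} [Field k] [Ring A] [Algebra k A]
    (c : k) (q : Polynomial A) (x : A) :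
    (q.comp (X + C (c • (1 : A)))).eval x = q.eval (x + c • (1 : A)) := by
  apply C_injective
  rw [← comp_C, ← comp_C, comp_add_smul_one_comp, C_add]

/-- conformal associativity `p ∘λ (q ∘μ r) = (p ∘λ q) ∘(μ+λ) r`. -/
theorem stmt_6 {k : Type*} [Field k] {A : Type*} [Ring A] [Algebra k A]
    (p q r : Polynomial A) (lam mu : k) :
    cprod lam p (cprod mu q r) = cprod (mu + lam) (cprod lam p q) r := by
  have hq : (-(mu + lam)) • (1 : A) + lam • (1 : A) = (-mu) • (1 : A) := by
    rw [← add_smul]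
    congr 1
    ring
  have hr : X + C (lam • (1 : A)) + C (mu • (1 : A)) = X + C ((mu + lam) • (1 : A)) := by
    rw [add_assoc, ← C_add, ← add_smul, add_comm lam mu]
  unfold cprod
  rw [C_mul_comp, comp_add_smul_one_comp, hr, eval_C_mul, eval_comp_add_smul_one, hq, C_mul,
    mul_assoc]
end

section
/- Let k be a field and A an associative unital k-algebra (possibly noncommutative). For λ ∈ k and p, q ∈ Polynomial A define {p ∘λ q} := (p.comp(X - C(λ • 1))) * C(q.eval(λ • 1)) and (p ∘λ q) := C(p.eval((-λ) • 1)) * (q.comp(X + C(λ • 1))). Then for all p, q, r ∈ Polynomial A and all λ, μ ∈ k: {{p ∘λ q} ∘μ r} = {p ∘(μ+λ) {q ∘μ r}} = {p ∘(μ+λ) (q ∘(−λ) r)}. -/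
/-!
Although `A` is noncommutative, `l • 1` is central in `A`, so evaluation at it and composition with
`X - C (l • 1)` are ring homomorphisms (`eval_smul_one_mul`, `mul_comp_shift`), and translations
compose additively with each other (`shift_shift`) and with evaluation (`eval_shift`). Writing
`p(X - l)` for the translate of `p`, all three expressions of the theorem therefore reduce to
`p(X - (mu + lam)) * q(lam) * r(mu)`.
-/

open Polynomial

/-- The λ-product `{p ∘λ q} = p.comp(X - C(λ•1)) * C(q.eval(λ•1))` on
`Polynomial A`. -/
noncomputable def cbrace {k : Type*} [Field k] {A : Type*} [Ring A] [Algebra k A]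
    (lam : k) (p q : Polynomial A) : Polynomial A :=
  (p.comp (X - C (lam • (1 : A)))) * C (q.eval (lam • (1 : A)))

/-- Multiplicativity needs only that the evaluation point commutes with the coefficients of the
right factor. -/
lemma eval_smul_one_mul {k A : Type*} [Field k] [Ring A] [Algebra k A]
    (p q : Polynomial A) (l : k) :
    (p * q).eval (l • (1 : A)) = p.eval (l • (1 : A)) * q.eval (l • (1 : A)) :=
  eval₂_mul_noncomm _ _ fun _ => (Commute.one_right _).smul_right l

lemma commute_C_shift {k A : Type*} [Field k] [Ring A] [Algebra k A] (a : A) (l : k) :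
    Commute (C a) (X - C (l • (1 : A))) :=
  (commute_X (C a)).symm.sub_right (((Commute.one_right a).smul_right l).map C)

lemma mul_comp_shift {k A : Type*} [Field k] [Ring A] [Algebra k A]
    (p q : Polynomial A) (l : k) :
    (p * q).comp (X - C (l • (1 : A))) =
      p.comp (X - C (l • (1 : A))) * q.comp (X - C (l • (1 : A))) :=
  eval₂_mul_noncomm _ _ fun _ => commute_C_shift _ l

lemma shift_shift {k A : Type*} [Field k] [Ring A] [Algebra k A]
    (p : Polynomial A) (l m : k) :
    (p.comp (X - C (l • (1 : A)))).comp (X - C (m • (1 : A))) =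
      p.comp (X - C ((m + l) • (1 : A))) := by
  induction p using Polynomial.induction_on with
  | C a => simp only [C_comp]
  | add p q hp hq => simp only [add_comp, hp, hq]
  | monomial n a ih =>
    rw [pow_succ, ← mul_assoc, mul_comp_shift _ X, mul_comp_shift, mul_comp_shift _ X, ih]
    congr 1
    simp only [X_comp, sub_comp, C_comp, add_smul, C_add, sub_sub]

lemma eval_shift {k A : Type*} [Field k] [Ring A] [Algebra k A]
    (p : Polynomial A) (l m : k) :
    (p.comp (X - C (l • (1 : A)))).eval (m • (1 : A)) = p.eval ((m - l) • (1 : A)) := by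
  induction p using Polynomial.induction_on with
  | C a => simp only [C_comp, eval_C]
  | add p q hp hq => simp only [add_comp, eval_add, hp, hq]
  | monomial n a ih =>
    rw [pow_succ, ← mul_assoc, mul_comp_shift _ X, eval_smul_one_mul, eval_smul_one_mul _ X, ih]
    congr 1
    simp only [X_comp, eval_sub, eval_X, eval_C, sub_smul]

/-- identity (8) of the paper specialized to `Cur A`:
`{{p ∘λ q} ∘μ r} = {p ∘(μ+λ) {q ∘μ r}} = {p ∘(μ+λ) (q ∘(−λ) r)}`. -/
theorem stmt_7 {k : Type*} [Field k] {A : Type*} [Ring A] [Algebra k A]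
    (p q r : Polynomial A) (lam mu : k) :
    cbrace mu (cbrace lam p q) r = cbrace (mu + lam) p (cbrace mu q r) ∧
    cbrace (mu + lam) p (cbrace mu q r) = cbrace (mu + lam) p (cprod (-lam) q r) := by
  have hX : (X + C ((-lam) • (1 : A)) : Polynomial A) = X - C (lam • (1 : A)) := by
    rw [neg_smul, C_neg, sub_eq_add_neg]
  constructor
  · simp only [cbrace, mul_comp_shift, shift_shift, eval_smul_one_mul, eval_shift, C_comp, eval_C,
      add_sub_cancel_left, C_mul, mul_assoc]
  · simp only [cbrace, cprod, hX, neg_neg, eval_smul_one_mul, eval_shift, eval_C,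
      add_sub_cancel_left, add_sub_cancel_right]
end

section
/- Let k be a field and A an associative unital k-algebra (possibly noncommutative). For λ ∈ k and p, q ∈ Polynomial A define {p ∘λ q} := (p.comp(X - C(λ • 1))) * C(q.eval(λ • 1)) and (p ∘λ q) := C(p.eval((-λ) • 1)) * (q.comp(X + C(λ • 1))). Then for all p, q, r ∈ Polynomial A and all λ, μ ∈ k: ({p ∘λ q} ∘μ r) = ((p ∘(μ+λ) q) ∘μ r) = (p ∘(μ+λ) (q ∘(−λ) r)). -/
/-!
Everything reduces to two facts about `A[X]` at a scalar `c • 1`, which is central in `A`: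
evaluation there commutes with right multiplication by constants, and it carries the translation
`X ↦ X + c` to a shift of the evaluation point. Both `{p ∘λ q}` and `(p ∘(μ+λ) q)` then take the value `p(-μ-λ) q(λ)` at `-μ`,
which is the first identity. In the second one, the translations by `-λ` and by `μ + λ` applied
to `r` compose to the translation by `μ`.

For noncommutative `A`, composition and evaluation respect products only under commutation
hypotheses. The translation facts are therefore proved on monomials `a X ^ n`, where
`(X + c) ^ n` comes from `k[X]` and the commutative theory applies.
-/

open Polynomial

namespace Stmt8

variable {k : Type*} [Field k] {A : Type*} [Ring A] [Algebra k A]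

/-- The translation polynomial has scalar coefficients: it is the image of `X + c` in `k[X]`. -/
lemma shift_eq_map (c : k) :
    (X + C (c • (1 : A)) : A[X]) = (X + C c : k[X]).map (algebraMap k A) := by
  simp [Algebra.algebraMap_eq_smul_one]

lemma eval_shift (c d : k) (p : A[X]) :
    (p.comp (X + C (c • (1 : A)))).eval (d • (1 : A)) = p.eval ((d + c) • (1 : A)) := by
  induction p using Polynomial.induction_on' with
  | add p q hp hq => simp only [add_comp, eval_add, hp, hq]
  | monomial n a =>
    rw [monomial_comp, eval_C_mul, eval_monomial, shift_eq_map, ← Polynomial.map_pow,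
      eval_map_algebraMap]
    simp [Algebra.algebraMap_eq_smul_one, add_smul]

lemma shift_shift (c d : k) (p : A[X]) :
    (p.comp (X + C (c • (1 : A)))).comp (X + C (d • (1 : A))) =
      p.comp (X + C ((d + c) • (1 : A))) := by
  induction p using Polynomial.induction_on' with
  | add p q hp hq => simp only [add_comp, hp, hq]
  | monomial n a =>
    rw [monomial_comp, monomial_comp, C_mul_comp, shift_eq_map, shift_eq_map, shift_eq_map,
      ← Polynomial.map_pow, ← Polynomial.map_comp, ← Polynomial.map_pow]
    simp [add_assoc]

lemma eval_mul_C_scalar (c : k) (p : A[X]) (a : A) :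
    (p * C a).eval (c • (1 : A)) = p.eval (c • (1 : A)) * a := by
  induction p using Polynomial.induction_on' with
  | add p q hp hq => simp only [add_mul, eval_add, hp, hq]
  | monomial n b =>
    rw [monomial_mul_C, eval_monomial, eval_monomial]
    simp [_root_.smul_pow]

lemma eval_cbrace (lam c : k) (p q : A[X]) :
    (cbrace lam p q).eval (c • (1 : A)) =
      p.eval ((c - lam) • (1 : A)) * q.eval (lam • (1 : A)) := by
  have h : (X - C (lam • (1 : A)) : A[X]) = X + C ((-lam) • (1 : A)) := by
    simp [sub_eq_add_neg]
  rw [cbrace, eval_mul_C_scalar, h, eval_shift, sub_eq_add_neg]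

lemma eval_cprod (lam c : k) (p q : A[X]) :
    (cprod lam p q).eval (c • (1 : A)) =
      p.eval ((-lam) • (1 : A)) * q.eval ((c + lam) • (1 : A)) := by
  rw [cprod, eval_C_mul, eval_shift]

end Stmt8

/-- identity (9) of the paper specialized to `Cur A`:
`({p ∘λ q} ∘μ r) = ((p ∘(μ+λ) q) ∘μ r) = (p ∘(μ+λ) (q ∘(−λ) r))`. -/
theorem stmt_8 {k : Type*} [Field k] {A : Type*} [Ring A] [Algebra k A]
    (p q r : Polynomial A) (lam mu : k) :
    cprod mu (cbrace lam p q) r = cprod mu (cprod (mu + lam) p q) r ∧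
    cprod mu (cprod (mu + lam) p q) r = cprod (mu + lam) p (cprod (-lam) q r) := by
  constructor
  · rw [cprod, cprod, Stmt8.eval_cbrace, Stmt8.eval_cprod, neg_add, neg_add_cancel_left,
      sub_eq_add_neg]
  · rw [cprod, Stmt8.eval_cprod, neg_add_cancel_left, cprod, cprod, C_mul_comp,
      Stmt8.shift_shift, neg_neg, add_neg_cancel_right, C_mul, mul_assoc]
end

section
/- Let k be a field and A an associative unital k-algebra (possibly noncommutative). Define two bilinear operations on Polynomial A by p ⊢ q := C(p.coeff 0) * q and p ⊣ q := p * C(q.coeff 0). Then (Polynomial A, ⊣, ⊢) is an associative dialgebra, i.e., for all p, q, r ∈ Polynomial A: (p⊣q)⊣r = p⊣(q⊣r), (p⊢q)⊣r = p⊢(q⊣r), (p⊢q)⊢r = p⊢(q⊢r), (p⊣q)⊢r = (p⊢q)⊢r, and p⊣(q⊢r) = p⊣(q⊣r). -/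
open Polynomial

/-- with `p ⊢ q := C(p.coeff 0) * q` and `p ⊣ q := p * C(q.coeff 0)`,
`Polynomial A` is an associative dialgebra (the dialgebra `(Cur A)⁽⁰⁾`). -/
theorem stmt_9 {k : Type*} [Field k] {A : Type*} [Ring A] [Algebra k A]
    (vdash dashv : Polynomial A → Polynomial A → Polynomial A)
    (hvd : ∀ p q : Polynomial A, vdash p q = C (p.coeff 0) * q)
    (hdv : ∀ p q : Polynomial A, dashv p q = p * C (q.coeff 0)) :
    ∀ p q r : Polynomial A,
      dashv (dashv p q) r = dashv p (dashv q r) ∧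
      dashv (vdash p q) r = vdash p (dashv q r) ∧
      vdash (vdash p q) r = vdash p (vdash q r) ∧
      vdash (dashv p q) r = vdash (vdash p q) r ∧
      dashv p (vdash q r) = dashv p (dashv q r) := by
  -- `p ↦ p.coeff 0` and `C` are both multiplicative, so everything reduces to associativity.
  intro p q r
  simp only [hvd, hdv, mul_coeff_zero, coeff_C_zero, C_mul, mul_assoc, and_self]
end

section
/- Let k be a field, L a (left) Leibniz algebra over k with bracket [·,·], V a k-vector space, and β : L → Module.End k V a k-linear map satisfying β([a,b]) = β(a) ∘ β(b) − β(b) ∘ β(a) for all a, b ∈ L. Set M₀ := V × (L ⊗[k] V). For a ∈ L define a₀ ∈ Module.End k M₀ by a₀(v, t) = (β(a) v, φ_a(t)), where φ_a : L ⊗ V → L ⊗ V is the unique linear map with φ_a(b ⊗ w) = b ⊗ β(a) w + [a,b] ⊗ w, and define a₁ ∈ Module.End k M₀ by a₁(v, t) = (0, a ⊗ v). Let ρ(a) := C(a₀) − C(a₁) * X ∈ Polynomial (Module.End k M₀). Then for all a, b ∈ L: ρ([a,b]) = C(a₀) * ρ(b) − ρ(b) * C(a₀); equivalently, ρ([a,b])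 = C((ρ a).coeff 0) * ρ(b) − ρ(b) * C((ρ a).coeff 0). -/
/-!
Comparing coefficients of `X` (which is central), the identity splits into the two commutator
relations `[a,b]₀ = a₀ b₀ - b₀ a₀` (`endZero_bracket`) and `[a,b]₁ = a₀ b₁ - b₁ a₀`
(`endOne_bracket`) in `End (V × (L ⊗ V))`. The first uses the Leibniz identity and the hypothesis
on `β`; the second is immediate from the definition of `φ_a`. The two forms of the conclusion
agree because `(ρ a).coeff 0 = a₀`.
-/

open Polynomial TensorProduct

section

variable {k : Type*} [Field k] {L : Type*} [AddCommGroup L] [Module k L]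
  {V : Type*} [AddCommGroup V] [Module k V]

/-- `φ_a : L ⊗ V → L ⊗ V`, the unique linear map with
`φ_a (b ⊗ w) = b ⊗ (β a) w + [a,b] ⊗ w`. -/
noncomputable def phiMap (bracket : L →ₗ[k] L →ₗ[k] L) (β : L →ₗ[k] Module.End k V)
    (a : L) : (L ⊗[k] V) →ₗ[k] (L ⊗[k] V) :=
  TensorProduct.map LinearMap.id (β a) + TensorProduct.map (bracket a) LinearMap.id

/-- `a₀ ∈ End (V × (L ⊗ V))`, `a₀ (v, t) = ((β a) v, φ_a t)`. -/
noncomputable def endZero (bracket : L →ₗ[k] L →ₗ[k] L) (β : L →ₗ[k] Module.End k V)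
    (a : L) : Module.End k (V × (L ⊗[k] V)) :=
  LinearMap.prodMap (β a) (phiMap bracket β a)

/-- `a₁ ∈ End (V × (L ⊗ V))`, `a₁ (v, t) = (0, a ⊗ v)`. -/
noncomputable def endOne (a : L) : Module.End k (V × (L ⊗[k] V)) :=
  (LinearMap.inr k V (L ⊗[k] V)).comp
    ((TensorProduct.mk k L V a).comp (LinearMap.fst k V (L ⊗[k] V)))

/-- `ρ(a) = C(a₀) − C(a₁)·X ∈ Polynomial (End (V × (L ⊗ V)))`, the conformal
representation of formula (10) of the paper. -/
noncomputable def rhoRep (bracket : L →ₗ[k] L →ₗ[k] L) (β : L →ₗ[k] Module.End k V)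
    (a : L) : Polynomial (Module.End k (V × (L ⊗[k] V))) :=
  C (endZero bracket β a) - C (endOne a) * X

/-- The degree-zero part of the identity: `a ↦ a₀` is compatible with brackets. On `V` this is the
hypothesis on `β`; on `L ⊗ V` the cross terms cancel and the Leibniz identity does the rest. -/
theorem endZero_bracket (bracket : L →ₗ[k] L →ₗ[k] L)
    (hLeib : ∀ a b c : L,
      bracket a (bracket b c) = bracket (bracket a b) c + bracket b (bracket a c))
    (β : L →ₗ[k] Module.End k V)
    (hβ : ∀ a b : L, β (bracket a b) = (β a) ∘ₗ (β b) - (β b) ∘ₗ (β a)) (a b : L) :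
    endZero bracket β (bracket a b)
      = endZero bracket β a * endZero bracket β b
        - endZero bracket β b * endZero bracket β a := by
  have hphi : phiMap bracket β (bracket a b)
      = phiMap bracket β a ∘ₗ phiMap bracket β b
        - phiMap bracket β b ∘ₗ phiMap bracket β a := by
    ext c w
    have h : bracket (bracket a b) c
        = bracket a (bracket b c) - bracket b (bracket a c) := by
      rw [hLeib a b c, add_sub_cancel_right]
    simp [phiMap, hβ, h, tmul_sub, sub_tmul]
    abel
  apply LinearMap.ext
  rintro ⟨v, t⟩
  simp [endZero, hphi, hβ]

/-- The degree-one part of the identity: the commutator `a₀ b₁ - b₁ a₀` sends `(v, t)` to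
`(0, φ_a (b ⊗ v) - b ⊗ β a v)`, and this difference is `[a,b] ⊗ v`. -/
theorem endOne_bracket (bracket : L →ₗ[k] L →ₗ[k] L)
    (β : L →ₗ[k] Module.End k V) (a b : L) :
    (endOne (bracket a b) : Module.End k (V × (L ⊗[k] V)))
      = endZero bracket β a * endOne b - endOne b * endZero bracket β a := by
  apply LinearMap.ext
  rintro ⟨v, t⟩
  simp [endZero, endOne, phiMap]

/-- The commutator of a constant with a linear polynomial is computed coefficientwise. -/
theorem polynomial_commutator {R : Type*} [Ring R] (r s t : R) :
    C (r * s - s * r) - C (r * t - t * r) * X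
      = C r * (C s - C t * X) - (C s - C t * X) * C r := by
  simp only [C_sub, C_mul, mul_sub, sub_mul]
  -- `X` is central although `R` need not be commutative.
  rw [mul_assoc (C t) X, X_mul_C]
  simp only [mul_assoc]
  abel

/-- `ρ` is a homomorphism of Leibniz algebras into the adjoint
Leibniz algebra of `Polynomial (End M₀)`:
`ρ([a,b]) = C(a₀) * ρ(b) − ρ(b) * C(a₀)`, equivalently
`ρ([a,b]) = C((ρ a).coeff 0) * ρ(b) − ρ(b) * C((ρ a).coeff 0)`. -/
theorem stmt_11 (bracket : L →ₗ[k] L →ₗ[k] L)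
    (hLeib : ∀ a b c : L,
      bracket a (bracket b c) = bracket (bracket a b) c + bracket b (bracket a c))
    (β : L →ₗ[k] Module.End k V)
    (hβ : ∀ a b : L, β (bracket a b) = (β a) ∘ₗ (β b) - (β b) ∘ₗ (β a)) :
    ∀ a b : L,
      rhoRep bracket β (bracket a b)
          = C (endZero bracket β a) * rhoRep bracket β b
            - rhoRep bracket β b * C (endZero bracket β a) ∧
      rhoRep bracket β (bracket a b)
          = C ((rhoRep bracket β a).coeff 0) * rhoRep bracket β b
            - rhoRep bracket β b * C ((rhoRep bracket β a).coeff 0) := by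
  intro a b
  have h0 : (rhoRep bracket β a).coeff 0 = endZero bracket β a := by
    simp [rhoRep]
  have main : rhoRep bracket β (bracket a b)
      = C (endZero bracket β a) * rhoRep bracket β b
        - rhoRep bracket β b * C (endZero bracket β a) := by
    unfold rhoRep
    rw [endZero_bracket bracket hLeib β hβ a b, endOne_bracket bracket β a b]
    exact polynomial_commutator _ _ _
  exact ⟨main, by rw [h0]; exact main⟩

end
end

section
/- Let k be a field, L a (left) Leibniz algebra over k with bracket [·,·], V a nonzero k-vector space, and β : L → Module.End k V a k-linear map satisfying β([a,b]) = β(a) ∘ β(b) − β(b) ∘ β(a) for all a, b ∈ L. With M₀ := V × (L ⊗[k] V) and ρ(a) := C(a₀) − C(a₁) * X ∈ Polynomial (Module.End k M₀), where a₀(v, t) = (β(a) v, φ_a(t)) with φ_a(b ⊗ w) = b ⊗ β(a) w + [a,b] ⊗ w and a₁(v, t) = (0, a ⊗ v): the map a ↦ ρ(a) is k-linear and injective. -/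
/-!
Both `a ↦ a₀` and `a ↦ a₁` are `k`-linear (`endZero_add`, `endZero_smul`, `endOne_add`,
`endOne_smul`), hence so is `a ↦ ρ(a) = C(a₀) − C(a₁)·X`. For injectivity, `ρ(a) = ρ(b)` gives
`a₁ = b₁` by comparing coefficients of `X`; evaluating at `(v, 0)` with `v ≠ 0` gives
`a ⊗ v = b ⊗ v`, and contracting with a functional `f` such that `f v ≠ 0` gives `a = b`.
-/

open Polynomial TensorProduct

section
open Polynomial TensorProduct

section

variable {k : Type*} [Field k] {L : Type*} [AddCommGroup L] [Module k L]
  {V : Type*} [AddCommGroup V] [Module k V]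

theorem endZero_add (bracket : L →ₗ[k] L →ₗ[k] L) (β : L →ₗ[k] Module.End k V) (a b : L) :
    endZero bracket β (a + b) = endZero bracket β a + endZero bracket β b := by
  ext <;> simp [endZero, phiMap, TensorProduct.tmul_add, TensorProduct.add_tmul]
  abel

theorem endZero_smul (bracket : L →ₗ[k] L →ₗ[k] L) (β : L →ₗ[k] Module.End k V) (c : k) (a : L) :
    endZero bracket β (c • a) = c • endZero bracket β a := by
  ext <;> simp [endZero, phiMap, TensorProduct.smul_tmul']

theorem endOne_add (a b : L) : endOne (k := k) (V := V) (a + b) = endOne a + endOne b := by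
  ext <;> simp [endOne]

theorem endOne_smul (c : k) (a : L) : endOne (k := k) (V := V) (c • a) = c • endOne a := by
  ext <;> simp [endOne, TensorProduct.smul_tmul']

/-- for a nonzero `k`-vector space `V`, the map `a ↦ ρ(a)` is
`k`-linear and injective (faithfulness part of Theorem 3 of the paper). -/
theorem stmt_12 [Nontrivial V] (bracket : L →ₗ[k] L →ₗ[k] L)
    (hLeib : ∀ a b c : L,
      bracket a (bracket b c) = bracket (bracket a b) c + bracket b (bracket a c))
    (β : L →ₗ[k] Module.End k V)
    (hβ : ∀ a b : L, β (bracket a b) = (β a) ∘ₗ (β b) - (β b) ∘ₗ (β a)) :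
    (∀ a b : L, rhoRep bracket β (a + b) = rhoRep bracket β a + rhoRep bracket β b) ∧
    (∀ (c : k) (a : L), rhoRep bracket β (c • a) = c • rhoRep bracket β a) ∧
    Function.Injective (rhoRep bracket β) := by
  refine ⟨fun a b => ?_, fun c a => ?_, fun a b h => ?_⟩
  · rw [rhoRep, rhoRep, rhoRep, endZero_add, endOne_add, C_add, C_add, add_mul]
    abel
  · rw [rhoRep, rhoRep, endZero_smul, endOne_smul, ← smul_C, ← smul_C, smul_mul_assoc]
    exact (smul_sub c (C (endZero bracket β a)) (C (endOne a) * X)).symm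
  · have h1 : endOne (k := k) (V := V) a = endOne b := by
      have := congrArg (fun p => coeff p 1) h
      simpa [rhoRep, coeff_C] using this
    obtain ⟨v, hv⟩ := exists_ne (0 : V)
    obtain ⟨f, hf⟩ : ∃ f : Module.Dual k V, f v ≠ 0 := by
      by_contra! hall
      exact hv ((Module.forall_dual_apply_eq_zero_iff k v).1 hall)
    have h2 : a ⊗ₜ[k] v = b ⊗ₜ[k] v := by
      simpa [endOne] using congrArg (fun g => (g (v, 0)).2) h1
    have h3 : f v • a = f v • b := by
      simpa using congrArg (fun t => TensorProduct.rid k L (TensorProduct.map LinearMap.id f t)) h2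
    exact smul_right_injective L hf h3


end
end
end

section
/- Let k be a field and L a (left) Leibniz algebra over k, i.e., a k-vector space with a bilinear bracket [·,·] satisfying [a,[b,c]] = [[a,b],c] + [b,[a,c]]. Then there exist a k-vector space M₀ and an injective k-linear map ρ : L → Polynomial (Module.End k M₀) such that for all a, b ∈ L: ρ([a,b]) = C((ρ a).coeff 0) * ρ(b) − ρ(b) * C((ρ a).coeff 0). -/
/-!
The representation space is `k × L`. Each `a : L` acts in two ways: by the operator
`A a : (s, x) ↦ (0, [a, x])` and by the operator `B a : (s, x) ↦ (0, s • a)`. The Leibniz identity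
says that `A [a, b] = A a * A b - A b * A a`, and evaluating both sides gives
`B [a, b] = A a * B b - B b * A a`, since `B b` kills the image of `A a`. Hence
`ρ a = A a + (B a) X` satisfies the required identity coefficient by coefficient, the coefficient
of `ρ a` at `0` being `A a`. It is injective because `B a (1, 0) = (0, a)` recovers `a`; the
adjoint action `A` alone need not be faithful.
-/

open Polynomial

universe u v

/-- The adjoint action of `a` on the summand `L` of `k × L`, extended by zero on `k`. -/
def adOp {k : Type u} [Field k] {L : Type v} [AddCommGroup L] [Module k L]
    (bracket : L →ₗ[k] L →ₗ[k] L) (a : L) : Module.End k (k × L) :=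
  LinearMap.inr k k L ∘ₗ bracket a ∘ₗ LinearMap.snd k k L

/-- The square-zero operator `(s, x) ↦ (0, s • a)` on `k × L`. -/
def shiftOp (k : Type u) [Field k] {L : Type v} [AddCommGroup L] [Module k L]
    (a : L) : Module.End k (k × L) :=
  LinearMap.inr k k L ∘ₗ LinearMap.toSpanSingleton k L a ∘ₗ LinearMap.fst k k L

section

variable {k : Type u} [Field k] {L : Type v} [AddCommGroup L] [Module k L]

lemma adOp_apply (bracket : L →ₗ[k] L →ₗ[k] L) (a : L) (m : k × L) :
    adOp bracket a m = (0, bracket a m.2) := rfl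

lemma shiftOp_apply (a : L) (m : k × L) : shiftOp k a m = (0, m.1 • a) := rfl

lemma adOp_bracket (bracket : L →ₗ[k] L →ₗ[k] L)
    (hLeib : ∀ a b c : L,
      bracket a (bracket b c) = bracket (bracket a b) c + bracket b (bracket a c)) (a b : L) :
    adOp bracket (bracket a b) =
      adOp bracket a * adOp bracket b - adOp bracket b * adOp bracket a := by
  refine LinearMap.ext fun m => ?_
  simp only [LinearMap.sub_apply, Module.End.mul_apply, adOp_apply, Prod.mk_sub_mk, sub_self]
  rw [hLeib a b, add_sub_cancel_right]

lemma shiftOp_bracket (bracket : L →ₗ[k] L →ₗ[k] L) (a b : L) :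
    shiftOp k (bracket a b) =
      adOp bracket a * shiftOp k b - shiftOp k b * adOp bracket a := by
  refine LinearMap.ext fun m => ?_
  simp [Module.End.mul_apply, adOp_apply, shiftOp_apply]

end

/-- Theorem 3 / Corollary 4 of the paper: every Leibniz algebra
`L` over a field `k` admits a faithful conformal representation: there are a
`k`-vector space `M₀` and an injective `k`-linear map
`ρ : L → Polynomial (Module.End k M₀)` such that
`ρ([a,b]) = C((ρ a).coeff 0) * ρ(b) − ρ(b) * C((ρ a).coeff 0)`. -/
theorem stmt_13 {k : Type u} [Field k] {L : Type v} [AddCommGroup L] [Module k L]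
    (bracket : L →ₗ[k] L →ₗ[k] L)
    (hLeib : ∀ a b c : L,
      bracket a (bracket b c) = bracket (bracket a b) c + bracket b (bracket a c)) :
    ∃ (M₀ : Type (max u v)) (_ : AddCommGroup M₀) (_ : Module k M₀)
      (ρ : L → Polynomial (Module.End k M₀)),
      Function.Injective ρ ∧
      (∀ a b : L, ρ (a + b) = ρ a + ρ b) ∧
      (∀ (c : k) (a : L), ρ (c • a) = c • ρ a) ∧
      (∀ a b : L,
        ρ (bracket a b) = C ((ρ a).coeff 0) * ρ b - ρ b * C ((ρ a).coeff 0)) := by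
  refine ⟨k × L, inferInstance, inferInstance,
    fun a => monomial 0 (adOp bracket a) + monomial 1 (shiftOp k a), ?_, ?_, ?_, ?_⟩
  · intro a b h
    have h1 : shiftOp k a = shiftOp k b := by
      simpa [coeff_monomial] using congrArg (fun p => p.coeff 1) h
    simpa [shiftOp_apply] using LinearMap.congr_fun h1 (1, 0)
  · intro a b
    have hA : adOp bracket (a + b) = adOp bracket a + adOp bracket b :=
      LinearMap.ext fun m => by simp [adOp_apply]
    have hB : shiftOp k (a + b) = shiftOp k a + shiftOp k b :=
      LinearMap.ext fun m => by simp [shiftOp_apply]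
    simp only [hA, hB, map_add]
    abel
  · intro c a
    have hA : adOp bracket (c • a) = c • adOp bracket a :=
      LinearMap.ext fun m => by simp [adOp_apply]
    have hB : shiftOp k (c • a) = c • shiftOp k a :=
      LinearMap.ext fun m => by simp [shiftOp_apply, smul_comm m.1 c a]
    simp only [hA, hB, smul_add, smul_monomial]
  · intro a b
    have h0 : (monomial 0 (adOp bracket a) + monomial 1 (shiftOp k a)).coeff 0 =
        adOp bracket a := by
      simp [coeff_monomial]
    simp only [h0, adOp_bracket bracket hLeib, shiftOp_bracket, mul_add, add_mul,
      C_mul_monomial, monomial_mul_C, map_sub]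
    abel
end

section
/- Let k be a field and L a finite-dimensional (left) Leibniz algebra over k. Then there exist a finite-dimensional k-vector space M₀ and an injective k-linear map ρ : L → Polynomial (Module.End k M₀) such that for all a, b ∈ L: ρ([a,b]) = C((ρ a).coeff 0) * ρ(b) − ρ(b) * C((ρ a).coeff 0). -/
/-!
It suffices to find linear maps `ρ₀, ρ₁ : L → End M₀` with `ρ₀ [a,b] = [ρ₀ a, ρ₀ b]` and
`ρ₁ [a,b] = [ρ₀ a, ρ₁ b]` such that `ρ₁` is injective: then `ρ a = ρ₀ a + ρ₁ a X` works.
Take `M₀ = k × L`, let `ρ₀ a` act by `(t, x) ↦ (0, [a, x])` and `ρ₁ b` by `(t, x) ↦ (0, t b)`.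
The first identity is the left Leibniz identity, the second is linearity of `[a, ·]`, and
`ρ₁ b (1, 0) = (0, b)` recovers `b`. Elements acting trivially on the left are killed by `ρ₀`;
they are detected by the coefficient of `X`.
-/

open Polynomial

universe u v

theorem C_bracket_add_C_bracket_mul_X {R : Type*} [Ring R] (a b d : R) :
    C (a * b - b * a) + C (a * d - d * a) * X =
      C a * (C b + C d * X) - (C b + C d * X) * C a := by
  simp only [C_sub, C_mul, mul_add, add_mul, sub_mul, mul_assoc, X_mul_C]
  abel

/-- finite version of Theorem 3 / Corollary 4 of the paper: every
finite-dimensional Leibniz algebra `L` over a field `k` has a finite faithful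
conformal representation: there are a finite-dimensional `k`-vector space `M₀`
and an injective `k`-linear map `ρ : L → Polynomial (Module.End k M₀)` with
`ρ([a,b]) = C((ρ a).coeff 0) * ρ(b) − ρ(b) * C((ρ a).coeff 0)`. -/
theorem stmt_14 {k : Type u} [Field k] {L : Type v} [AddCommGroup L] [Module k L]
    [FiniteDimensional k L]
    (bracket : L →ₗ[k] L →ₗ[k] L)
    (hLeib : ∀ a b c : L,
      bracket a (bracket b c) = bracket (bracket a b) c + bracket b (bracket a c)) :
    ∃ (M₀ : Type (max u v)) (_ : AddCommGroup M₀) (_ : Module k M₀)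
      (_ : FiniteDimensional k M₀)
      (ρ : L → Polynomial (Module.End k M₀)),
      Function.Injective ρ ∧
      (∀ a b : L, ρ (a + b) = ρ a + ρ b) ∧
      (∀ (c : k) (a : L), ρ (c • a) = c • ρ a) ∧
      (∀ a b : L,
        ρ (bracket a b) = C ((ρ a).coeff 0) * ρ b - ρ b * C ((ρ a).coeff 0)) := by
  let r₀ : L → Module.End k (k × L) := fun a =>
    LinearMap.inr k k L ∘ₗ bracket a ∘ₗ LinearMap.snd k k L
  let r₁ : L → Module.End k (k × L) := fun b =>
    LinearMap.inr k k L ∘ₗ LinearMap.toSpanSingleton k L b ∘ₗ LinearMap.fst k k L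
  have e₀ : ∀ a p, r₀ a p = (0, bracket a p.2) := fun _ _ => rfl
  have e₁ : ∀ b p, r₁ b p = (0, p.1 • b) := fun _ _ => rfl
  clear_value r₀ r₁
  have add₀ : ∀ a b, r₀ (a + b) = r₀ a + r₀ b := fun a b =>
    LinearMap.ext fun p => by simp [e₀]
  have add₁ : ∀ a b, r₁ (a + b) = r₁ a + r₁ b := fun a b =>
    LinearMap.ext fun p => by simp [e₁]
  have smul₀ : ∀ (c : k) a, r₀ (c • a) = c • r₀ a := fun c a =>
    LinearMap.ext fun p => by simp [e₀]
  have smul₁ : ∀ (c : k) a, r₁ (c • a) = c • r₁ a := fun c a =>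
    LinearMap.ext fun p => by simp [e₁, smul_comm c]
  have br₀ : ∀ a b, r₀ (bracket a b) = r₀ a * r₀ b - r₀ b * r₀ a := fun a b =>
    LinearMap.ext fun p => by simp [e₀, hLeib a b]
  have br₁ : ∀ a b, r₁ (bracket a b) = r₀ a * r₁ b - r₁ b * r₀ a := fun a b =>
    LinearMap.ext fun p => by simp [e₀, e₁]
  refine ⟨k × L, inferInstance, inferInstance, inferInstance,
    fun a => C (r₀ a) + C (r₁ a) * X, ?_, ?_, ?_, ?_⟩
  · intro a b h
    have h1 : r₁ a = r₁ b := by simpa using congrArg (fun p => p.coeff 1) h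
    simpa [e₁] using LinearMap.congr_fun h1 (1, 0)
  · intro a b
    simp only [add₀, add₁, C_add, add_mul]
    abel
  · intro c a
    simp only [smul₀, smul₁, smul_add, ← smul_C, smul_mul_assoc]
  · intro a b
    have h0 : (C (r₀ a) + C (r₁ a) * X : Polynomial (Module.End k (k × L))).coeff 0 = r₀ a := by
      simp
    simp only [h0, br₀, br₁, C_bracket_add_C_bracket_mul_X]
end

section
/- Let k be a field and L a (left) Leibniz algebra over k. Then there exist a k-vector space D, bilinear operations ⊣, ⊢ on D satisfying the five associative dialgebra identities ((x⊣y)⊣z = x⊣(y⊣z), (x⊢y)⊣z = x⊢(y⊣z), (x⊢y)⊢z = x⊢(y⊢z), (x⊣y)⊢z = (x⊢y)⊢z, x⊣(y⊢z) = x⊣(y⊣z)), and an injective k-linear map ρ : L → D such that ρ([a,b]) = ρ(a) ⊢ ρ(b) − ρ(b) ⊣ ρ(a) for all a, b ∈ L. -/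
universe u v

/-!
No enveloping algebra (hence no PBW theorem) is needed. The left Leibniz identity says precisely that
`ad : L → End L`, `ad a = [a, ·]`, satisfies `ad [a,b] = ad a ∘ ad b - ad b ∘ ad a`. Regard `L` as an
`End L`-bimodule with the natural left action and the zero right action, and put on `D = End L × L`
the operations `(f, m) ⊢ (g, n) = (f ∘ g, f n)` and `(f, m) ⊣ (g, n) = (f ∘ g, 0)`. The five dialgebra
identities are immediate, the map `ρ a = (ad a, a)` is injective, and the second component of
`ρ a ⊢ ρ b - ρ b ⊣ ρ a` is `[a, b] - 0`.
-/

/-- Corollary 5 of the paper; Loday–Pirashvili: every Leibniz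
algebra `L` over a field `k` embeds into the adjoint Leibniz algebra of an
associative dialgebra: there are a `k`-vector space `D` with bilinear operations
`⊣, ⊢` satisfying the five associative-dialgebra identities and an injective
`k`-linear `ρ : L → D` with `ρ([a,b]) = ρ(a) ⊢ ρ(b) − ρ(b) ⊣ ρ(a)`. -/
theorem stmt_15 {k : Type u} [Field k] {L : Type v} [AddCommGroup L] [Module k L]
    (bracket : L →ₗ[k] L →ₗ[k] L)
    (hLeib : ∀ a b c : L,
      bracket a (bracket b c) = bracket (bracket a b) c + bracket b (bracket a c)) :
    ∃ (D : Type (max u v)) (_ : AddCommGroup D) (_ : Module k D)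
      (dashv vdash : D →ₗ[k] D →ₗ[k] D) (ρ : L →ₗ[k] D),
      (∀ x y z : D, dashv (dashv x y) z = dashv x (dashv y z)) ∧
      (∀ x y z : D, dashv (vdash x y) z = vdash x (dashv y z)) ∧
      (∀ x y z : D, vdash (vdash x y) z = vdash x (vdash y z)) ∧
      (∀ x y z : D, vdash (dashv x y) z = vdash (vdash x y) z) ∧
      (∀ x y z : D, dashv x (vdash y z) = dashv x (dashv y z)) ∧
      Function.Injective ρ ∧
      (∀ a b : L, ρ (bracket a b) = vdash (ρ a) (ρ b) - dashv (ρ b) (ρ a)) := by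
  -- `ULift` only moves `End L × L` into the universe `max u v`.
  refine ⟨ULift.{u} (Module.End k L × L), inferInstance, inferInstance,
    LinearMap.mk₂ k (fun x y => ⟨(x.down.1 * y.down.1, 0)⟩)
      (by intros; ext <;> simp [add_mul]) (by intros; ext <;> simp)
      (by intros; ext <;> simp [mul_add]) (by intros; ext <;> simp),
    LinearMap.mk₂ k (fun x y => ⟨(x.down.1 * y.down.1, x.down.1 y.down.2)⟩)
      (by intros; ext <;> simp [add_mul]) (by intros; ext <;> simp)
      (by intros; ext <;> simp [mul_add]) (by intros; ext <;> simp),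
    { toFun := fun a => ⟨(bracket a, a)⟩
      map_add' := fun a b => by ext <;> simp
      map_smul' := fun c a => by ext <;> simp }, ?_, ?_, ?_, ?_, ?_, ?_, ?_⟩
  case refine_6 =>
    intro a b h
    exact congrArg (fun x => x.down.2) h
  case refine_7 =>
    intro a b
    ext c
    · simp [hLeib a b c]
    · simp
  all_goals
    intros
    ext <;> simp [mul_assoc]
end

section
/- Let k be a field, L a (left) Leibniz algebra over k, V a k-vector space, and β : L → Module.End k V a k-linear map with β([a,b]) = β(a) ∘ β(b) − β(b) ∘ β(a). With M₀ := V × (L ⊗[k] V), a₀(v, t) = (β(a) v, φ_a(t)) where φ_a(b ⊗ w) = b ⊗ β(a) w + [a,b] ⊗ w, a₁(v, t) = (0, a ⊗ v), and ρ(a) := C(a₀) − C(a₁) * X ∈ Polynomial (End M₀): for any c, a¹, …, aⁿ ∈ L (n ≥ 0) and any u ∈ V, the element w := ρ(c) * C(a¹₀ * a²₀ * ⋯ * aⁿ₀) ∈ Polynomial (End M₀) satisfies (w.coeff 0)(u, 0) = (β(c)(β(a¹)(β(a²)(⋯(β(aⁿ) u)))), 0) and (w.coeff 1)(u, 0) =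 −(0, c ⊗ β(a¹)(β(a²)(⋯(β(aⁿ) u)))). -/
/-!
Coefficients of `p * C e` are the coefficients of `p` composed with `e`, so the two
coefficients of `w` are `c₀` and `-c₁` composed with `a¹₀ ⋯ aⁿ₀`. Each `a₀` is block diagonal
on `V × (L ⊗ V)`, hence this product sends `(u, 0)` to `(β(a¹) ⋯ β(aⁿ) u, 0)`
(`prod_endZero_apply`), and the claim is the definition of `c₀` and `c₁`.
-/

open Polynomial TensorProduct

section
open Polynomial TensorProduct

section

variable {k : Type*} [Field k] {L : Type*} [AddCommGroup L] [Module k L]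
  {V : Type*} [AddCommGroup V] [Module k V]

/-- The product `a¹₀ ⋯ aⁿ₀` preserves `V × 0`, acting there as `β(a¹) ∘ ⋯ ∘ β(aⁿ)`. -/
lemma prod_endZero_apply (bracket : L →ₗ[k] L →ₗ[k] L) (β : L →ₗ[k] Module.End k V)
    (as : List L) (u : V) :
    (as.map (endZero bracket β)).prod ((u, 0) : V × (L ⊗[k] V))
      = (as.foldr (fun a v => β a v) u, 0) := by
  induction as with
  | nil => simp
  | cons a as ih => simp [Module.End.mul_apply, ih, endZero]

/-- for `c, a¹, …, aⁿ ∈ L` and `u ∈ V`, the word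
`w = ρ(c) * C(a¹₀ * a²₀ * ⋯ * aⁿ₀)` satisfies
`(w.coeff 0)(u, 0) = (β(c)(β(a¹)(⋯(β(aⁿ) u))), 0)` and
`(w.coeff 1)(u, 0) = −(0, c ⊗ β(a¹)(⋯(β(aⁿ) u)))`
(the key evaluation in the proof of Theorem 6 of the paper). -/
theorem stmt_17 (bracket : L →ₗ[k] L →ₗ[k] L)
    (hLeib : ∀ a b c : L,
      bracket a (bracket b c) = bracket (bracket a b) c + bracket b (bracket a c))
    (β : L →ₗ[k] Module.End k V)
    (hβ : ∀ a b : L, β (bracket a b) = (β a) ∘ₗ (β b) - (β b) ∘ₗ (β a))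
    (c : L) (as : List L) (u : V)
    (w : Polynomial (Module.End k (V × (L ⊗[k] V))))
    (hw : w = rhoRep bracket β c * C ((as.map (endZero bracket β)).prod)) :
    (w.coeff 0) ((u, 0) : V × (L ⊗[k] V))
        = (β c (as.foldr (fun a v => β a v) u), 0) ∧
    (w.coeff 1) ((u, 0) : V × (L ⊗[k] V))
        = -((0 : V), c ⊗ₜ[k] (as.foldr (fun a v => β a v) u)) := by
  subst hw
  constructor
  · simp [rhoRep, Module.End.mul_apply, prod_endZero_apply, endZero]
  · simp [rhoRep, coeff_mul_C, coeff_C, Module.End.mul_apply, prod_endZero_apply, endOne]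

end
end
end
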